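/- Assume Martin's Axiom for σ-centered posets. If D is a family of tall summable ideals with |D| < 𝔠, then there exists an ultrafilter U on ℕ which is an I-ultrafilter for every I ∈ D but is not rapid. -/

import Mathlib

open Set Filter

/-- The summable ideal determined by `g`. -/
def Ig (g : ℕ → ℝ) : Set (Set ℕ) := {A | Summable (A.indicator g)}

/-- `g` determines a tall summable ideal: positive, divergent series, tends to `0`. -/
def SummableTall (g : ℕ → ℝ) : Prop :=
  (∀ n, 0 < g n) ∧ ¬ Summable g ∧ Tendsto g atTop (nhds 0)

/-- A subset of a poset is centered if every finite subset has a common lower bound. -/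
def Centered {P : Type} [PartialOrder P] (S : Set P) : Prop :=
  ∀ T : Finset P, ↑T ⊆ S → ∃ r : P, ∀ p ∈ T, r ≤ p

/-- A poset is σ-centered if it is a countable union of centered pieces. -/
def SigmaCentered (P : Type) [PartialOrder P] : Prop :=
  ∃ c : P → ℕ, ∀ n : ℕ, Centered {p : P | c p = n}

/-- A filter on a poset: nonempty, upward closed, downward directed. -/
def PosetFilter {P : Type} [PartialOrder P] (G : Set P) : Prop :=
  G.Nonempty ∧ (∀ p ∈ G, ∀ q, p ≤ q → q ∈ G) ∧
    (∀ p ∈ G, ∀ q ∈ G, ∃ r ∈ G, r ≤ p ∧ r ≤ q)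

/-- A dense subset of a poset. -/
def DenseBelow {P : Type} [PartialOrder P] (D : Set P) : Prop :=
  ∀ p : P, ∃ q ∈ D, q ≤ p

/-- Martin's Axiom for σ-centered posets. -/
def MASigmaCentered : Prop :=
  ∀ (P : Type) [PartialOrder P] [Nonempty P], SigmaCentered P →
    ∀ 𝒟 : Set (Set P), Cardinal.mk ↥𝒟 < Cardinal.continuum →
      (∀ D ∈ 𝒟, DenseBelow D) →
      ∃ G : Set P, PosetFilter G ∧ ∀ D ∈ 𝒟, (G ∩ D).Nonempty

/-- `U` is an `I`-ultrafilter: every function maps some member of `U` into `I`. -/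
def IUlt (U : Ultrafilter ℕ) (I : Set (Set ℕ)) : Prop :=
  ∀ F : ℕ → ℕ, ∃ A ∈ U, F '' A ∈ I

/-- `U` is rapid: the enumeration functions of its members form a dominating family. -/
def Rapid (U : Ultrafilter ℕ) : Prop :=
  ∀ f : ℕ → ℕ, ∃ A ∈ U, A.Infinite ∧ ∀ᶠ n in atTop, f n ≤ Nat.nth (· ∈ A) n

/-!
For a weight `g` tending to `0`, count the points of weight more than `1 / (m + 1) ^ 2`. Since
`𝔟 = 𝔠`, a single function `G` eventually dominates these counts for all the weights defining the
ideals in `D`. From `G` we get a growth rate `h` and the proper ideal of those sets which, for some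
fixed `k`, have at most `h^[k] n` elements up to `h^[n] n` for almost all `n`. An ultrafilter
disjoint from this ideal is not rapid: if the `n`-th element of `A` exceeds `h^[n] n` for almost
all `n`, then `A` is in the ideal, with `k = 0`.

To make such an ultrafilter an `I`-ultrafilter for all `I ∈ D`, treat the pairs `(f, I)` by
transfinite recursion of length `𝔠`; fewer than `𝔠` sets have been chosen at each step. If a fiber
of `f` is positive relative to these, add that fiber. Otherwise, add the union `B` of a generic
filter of finite sets whose images under `f` have total weight less than `1`. A positive set has
more than `h (h^[k] n)` points up to some `h^[n] n`, and by pigeonhole more than `h^[k] n` of these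
are mapped onto a set of small weight, so `B` can be made positive on every finite intersection of
the chosen sets by meeting fewer than `𝔠` dense sets.
-/

/-! ### Combinatorics of weights -/

lemma sum_union_le_of_nonneg {β : Type*} [DecidableEq β] {g : β → ℝ} (hg : 0 ≤ g)
    (s t : Finset β) : ∑ y ∈ s ∪ t, g y ≤ ∑ y ∈ s, g y + ∑ y ∈ t, g y := by
  rw [← Finset.sum_union_inter]
  exact le_add_of_nonneg_right (Finset.sum_nonneg fun y _ => hg y)

lemma mem_Ig_of_forall_sum_le {g : ℕ → ℝ} (hg : 0 ≤ g) {A : Set ℕ} {c : ℝ}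
    (h : ∀ s : Finset ℕ, ↑s ⊆ A → ∑ y ∈ s, g y ≤ c) : A ∈ Ig g := by
  classical
  refine summable_of_sum_le (c := c) (indicator_nonneg fun y _ => hg y) fun s => ?_
  simp only [indicator_apply, ← Finset.sum_filter]
  exact h _ fun y hy => (Finset.mem_filter.1 hy).2

lemma mem_Ig_of_finite {g : ℕ → ℝ} {A : Set ℕ} (hA : A.Finite) : A ∈ Ig g :=
  summable_of_hasFiniteSupport (hA.subset support_indicator_subset)

/-- Pigeonhole: on `S`, either `f` takes `m` values of weight at most `δ`, or some value `m`
times. -/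
lemma exists_subset_card_ge_sum_image_le {α β : Type*} [DecidableEq β] {f : α → β} {g : β → ℝ}
    {S : Finset α} {m : ℕ} {δ ε : ℝ} (hheavy : {y | δ < g y}.Finite) (hδ : m * δ ≤ ε)
    (hε : ∀ x ∈ S, g (f x) ≤ ε) (hS : m * ({y | δ < g y}.ncard + m) < S.card) :
    ∃ a ⊆ S, m ≤ a.card ∧ ∑ y ∈ a.image f, g y ≤ ε := by
  obtain hlight | hlight := le_or_gt m ((S.image f).filter (g · ≤ δ)).card
  · obtain ⟨T, hT, rfl⟩ := Finset.exists_subset_card_eq hlight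
    obtain ⟨a, haS, rfl⟩ := Finset.subset_image_iff.1 (hT.trans (Finset.filter_subset _ _))
    refine ⟨a, haS, Finset.card_image_le, le_trans ?_ hδ⟩
    rw [← nsmul_eq_mul]
    exact Finset.sum_le_card_nsmul _ _ _ fun y hy => (Finset.mem_filter.1 (hT hy)).2
  · have hcover : S.image f ⊆ hheavy.toFinset ∪ (S.image f).filter (g · ≤ δ) := by
      intro y hy
      obtain h | h := lt_or_ge δ (g y) <;> simp_all
    have hcard : (S.image f).card ≤ {y | δ < g y}.ncard + m := by
      rw [ncard_eq_toFinset_card _ hheavy]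
      exact (Finset.card_le_card hcover).trans <|
        (Finset.card_union_le _ _).trans (Nat.add_le_add_left hlight.le _)
    obtain ⟨y, hy, hfiber⟩ := Finset.exists_lt_card_fiber_of_mul_lt_card_of_maps_to
      (fun x hx => Finset.mem_image_of_mem f hx)
      ((Nat.mul_comm _ m ▸ Nat.mul_le_mul_left m hcard).trans_lt hS)
    refine ⟨S.filter (f · = y), Finset.filter_subset _ _, hfiber.le, ?_⟩
    obtain ⟨x, hx, rfl⟩ := Finset.mem_image.1 hy
    have himage : (S.filter (f · = f x)).image f = {f x} := by
      ext z
      simp only [Finset.mem_image, Finset.mem_filter, Finset.mem_singleton]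
      exact ⟨fun ⟨_, ⟨_, h⟩, h'⟩ => h' ▸ h, fun h => ⟨x, ⟨hx, rfl⟩, h.symm⟩⟩
    simpa [himage] using hε x hx

/-! ### Sets that are sparse relative to the iterates of a function -/

section IterateSparse

variable {h : ℕ → ℕ} {A B : Set ℕ}

/-- `A` is sparse relative to `h` if for some fixed `k` its initial segments up to `h^[n] n` have
at most `h^[k] n` elements for almost all `n`. When `2 * m ≤ h m` for all `m`, these sets form a
proper ideal. -/
def IterateSparse (h : ℕ → ℕ) (A : Set ℕ) : Prop :=
  ∃ k, ∀ᶠ n in atTop, (A ∩ Iic (h^[n] n)).ncard ≤ h^[k] n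

lemma not_iterateSparse_iff :
    ¬ IterateSparse h A ↔ ∀ k N, ∃ n ≥ N, h^[k] n < (A ∩ Iic (h^[n] n)).ncard := by
  simp [IterateSparse]

namespace IterateSparse

lemma mono (hAB : A ⊆ B) (hB : IterateSparse h B) : IterateSparse h A := by
  obtain ⟨k, hk⟩ := hB
  exact ⟨k, hk.mono fun n hn =>
    (ncard_le_ncard (inter_subset_inter_left _ hAB) ((finite_Iic _).inter_of_right _)).trans hn⟩

lemma of_finite (hA : A.Finite) : IterateSparse h A := by
  refine ⟨0, ?_⟩
  filter_upwards [eventually_ge_atTop A.ncard] with n hn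
  exact (ncard_le_ncard inter_subset_left hA).trans hn

lemma union (hh : ∀ m, 2 * m ≤ h m) (hA : IterateSparse h A) (hB : IterateSparse h B) :
    IterateSparse h (A ∪ B) := by
  obtain ⟨k, hk⟩ := hA
  obtain ⟨l, hl⟩ := hB
  have hmono : Monotone fun k => h^[k] :=
    Function.monotone_iterate_of_id_le fun m => (Nat.le_mul_of_pos_left m two_pos).trans (hh m)
  refine ⟨max k l + 1, ?_⟩
  filter_upwards [hk, hl] with n hkn hln
  calc ((A ∪ B) ∩ Iic (h^[n] n)).ncard
      ≤ (A ∩ Iic (h^[n] n)).ncard + (B ∩ Iic (h^[n] n)).ncard := by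
        rw [union_inter_distrib_right]
        exact ncard_union_le _ _
    _ ≤ h^[max k l] n + h^[max k l] n :=
        add_le_add (hkn.trans (hmono (le_max_left k l) n)) (hln.trans (hmono (le_max_right k l) n))
    _ ≤ h^[max k l + 1] n := by
        rw [← two_mul, Function.iterate_succ_apply']
        exact hh _

end IterateSparse

lemma not_iterateSparse_univ (hh : ∀ m, m ≤ h m) : ¬ IterateSparse h univ := by
  refine not_iterateSparse_iff.2 fun k N => ⟨max k N, le_max_right k N, ?_⟩
  rw [univ_inter, ncard_Iic_nat, Nat.lt_succ_iff]
  exact Function.monotone_iterate_of_id_le hh (le_max_left k N) _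

/-- The dual filter of the ideal of sets that are sparse relative to `h`. -/
def cosparse (h : ℕ → ℕ) (hh : ∀ m, 2 * m ≤ h m) : Filter ℕ :=
  comk (IterateSparse h) (.of_finite finite_empty) (fun _ hB _ hAB => hB.mono hAB)
    fun _ hA _ hB => hA.union hh hB

variable {hh : ∀ m, 2 * m ≤ h m}

lemma mem_cosparse : A ∈ cosparse h hh ↔ IterateSparse h Aᶜ := Iff.rfl

lemma cosparse_inf_principal_neBot_iff :
    (cosparse h hh ⊓ 𝓟 A).NeBot ↔ ¬ IterateSparse h A := by
  rw [← compl_compl A, ← notMem_iff_inf_principal_compl, mem_cosparse]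

lemma cosparse_neBot : (cosparse h hh).NeBot := by
  rw [← inf_top_eq (cosparse h hh), ← principal_univ, cosparse_inf_principal_neBot_iff]
  exact not_iterateSparse_univ fun m => (Nat.le_mul_of_pos_left m two_pos).trans (hh m)

lemma not_iterateSparse_of_mem {L : Filter ℕ} [L.NeBot] (hL : L ≤ cosparse h hh) (hA : A ∈ L) :
    ¬ IterateSparse h A :=
  cosparse_inf_principal_neBot_iff.1 (NeBot.mono ‹_› (le_inf hL (le_principal_iff.2 hA)))

lemma cosparse_inf_neBot_iff {L : Filter ℕ} {ι : Type*} {s : ι → Set ℕ}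
    (hL : L.HasBasis (fun _ => True) s) :
    (cosparse h hh ⊓ L).NeBot ↔ ∀ i, ¬ IterateSparse h (s i) := by
  simp only [inf_comm _ L, hL.inf_neBot_iff, ← cosparse_inf_principal_neBot_iff (hh := hh),
    inf_principal_neBot_iff, inter_comm, forall_const]

lemma cosparse_le_cofinite : cosparse h hh ≤ cofinite :=
  fun _ hA => .of_finite (mem_cofinite.1 hA)

lemma ncard_inter_Iic_le_of_lt_nth {N n : ℕ} (hA : A.Infinite) (hN : N < Nat.nth (· ∈ A) n) :
    (A ∩ Iic N).ncard ≤ n := by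
  classical
  have hcount : (A ∩ Iic N).ncard = Nat.count (· ∈ A) (N + 1) := by
    rw [Nat.count_eq_card_filter_range, ← ncard_coe_finset]
    congr 1
    ext x
    simp [and_comm]
  rw [hcount, ← Nat.count_nth_of_infinite (p := (· ∈ A)) hA n]
  exact Nat.count_monotone _ hN

lemma not_rapid_of_le_cosparse {U : Ultrafilter ℕ} (hU : (U : Filter ℕ) ≤ cosparse h hh) :
    ¬ Rapid U := by
  intro hrapid
  obtain ⟨A, hAU, hA, hnth⟩ := hrapid fun n => h^[n] n + 1
  exact not_iterateSparse_of_mem hU hAU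
    ⟨0, hnth.mono fun n hn => ncard_inter_Iic_le_of_lt_nth hA hn⟩

end IterateSparse

/-! ### Consequences of Martin's axiom -/

lemma sigmaCentered_of_countable_codomain {P C : Type} [PartialOrder P] [Nonempty P] [Countable C]
    (c : P → C) (hc : ∀ x, Centered {p | c p = x}) : SigmaCentered P := by
  obtain ⟨e, he⟩ := exists_injective_nat C
  refine ⟨e ∘ c, fun n T hT => ?_⟩
  obtain rfl | ⟨p, hp⟩ := T.eq_empty_or_nonempty
  · exact ⟨Classical.arbitrary P, by simp⟩
  · exact hc (c p) T fun q hq => he ((hT hq).trans (hT hp).symm)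

/-- A condition of Hechler forcing: the first `len` values of a generic function, together with
the promise to stay above `fn` from there on; `fn` also records the values already decided. -/
structure HechlerCondition : Type where
  /-- The number of values already decided. -/
  len : ℕ
  /-- The decided values, followed by the lower bounds promised for the remaining ones. -/
  fn : ℕ → ℕ

namespace HechlerCondition

instance : Inhabited HechlerCondition := ⟨⟨0, 0⟩⟩

instance : PartialOrder HechlerCondition where
  le q p := p.len ≤ q.len ∧ p.fn ≤ q.fn ∧ EqOn q.fn p.fn (Iio p.len)
  le_refl p := ⟨le_rfl, le_rfl, fun _ _ => rfl⟩
  le_trans _ _ _ hrq hqp := ⟨hqp.1.trans hrq.1, hqp.2.1.trans hrq.2.1,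
    (hrq.2.2.mono (Iio_subset_Iio hqp.1)).trans hqp.2.2⟩
  le_antisymm := fun ⟨_, _⟩ ⟨_, _⟩ hpq hqp => by
    obtain rfl := hpq.1.antisymm hqp.1
    obtain rfl := hpq.2.1.antisymm hqp.2.1
    rfl

lemma le_def {p q : HechlerCondition} :
    q ≤ p ↔ p.len ≤ q.len ∧ p.fn ≤ q.fn ∧ EqOn q.fn p.fn (Iio p.len) := Iff.rfl

/-- The list of values decided by a condition. -/
def stem (p : HechlerCondition) : List ℕ := (List.range p.len).map p.fn

lemma stem_eq_iff {p q : HechlerCondition} :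
    q.stem = p.stem ↔ q.len = p.len ∧ EqOn q.fn p.fn (Iio p.len) := by
  refine ⟨fun h => ?_, fun ⟨hlen, hfn⟩ => ?_⟩
  · have hlen : q.len = p.len := by simpa [stem] using congrArg List.length h
    rw [stem, stem, hlen, List.map_inj_left] at h
    exact ⟨hlen, fun i hi => h i (List.mem_range.2 hi)⟩
  · rw [stem, stem, hlen, List.map_inj_left]
    exact fun i hi => hfn (List.mem_range.1 hi)

lemma centered_stem_eq (σ : List ℕ) : Centered {p : HechlerCondition | p.stem = σ} := by
  intro T hT
  obtain rfl | ⟨p, hp⟩ := T.eq_empty_or_nonempty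
  · exact ⟨default, by simp⟩
  have hstem : ∀ q ∈ T, q.len = p.len ∧ EqOn q.fn p.fn (Iio p.len) := fun q hq =>
    stem_eq_iff.1 ((hT hq).trans (hT hp).symm)
  refine ⟨⟨p.len, fun i => T.sup fun q => q.fn i⟩, fun q hq => le_def.2
    ⟨(hstem q hq).1.le, fun i => Finset.le_sup (f := fun q => q.fn i) hq, fun i hi => ?_⟩⟩
  rw [(hstem q hq).1] at hi
  refine le_antisymm (Finset.sup_le fun r hr => ?_) (Finset.le_sup (f := fun q => q.fn i) hq)
  rw [(hstem r hr).2 hi, (hstem q hq).2 hi]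

lemma sigmaCentered : SigmaCentered HechlerCondition :=
  sigmaCentered_of_countable_codomain stem centered_stem_eq

lemma denseBelow_le_len (n : ℕ) : DenseBelow {p : HechlerCondition | n ≤ p.len} := fun p =>
  ⟨⟨max n p.len, p.fn⟩, le_max_left n p.len, le_def.2 ⟨le_max_right _ _, le_rfl, fun _ _ => rfl⟩⟩

lemma denseBelow_forall_le_fn (g : ℕ → ℕ) :
    DenseBelow {p : HechlerCondition | ∀ n ≥ p.len, g n ≤ p.fn n} := by
  refine fun p => ⟨⟨p.len, fun n => if n < p.len then p.fn n else max (p.fn n) (g n)⟩,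
    fun n hn => ?_, le_def.2 ⟨le_rfl, fun n => ?_, fun n hn => ?_⟩⟩
  · simp [not_lt.2 hn]
  · dsimp only
    split_ifs <;> simp
  · simp_all

end HechlerCondition

namespace MASigmaCentered

variable {ι : Type}

lemma exists_posetFilter (hMA : MASigmaCentered) {P : Type} [PartialOrder P] [Nonempty P]
    (hP : SigmaCentered P) (hι : Cardinal.mk ι < Cardinal.continuum) {E : ι → Set P}
    (hE : ∀ i, DenseBelow (E i)) : ∃ F : Set P, PosetFilter F ∧ ∀ i, (F ∩ E i).Nonempty := by
  simpa using hMA P hP (range E) (Cardinal.mk_range_le.trans_lt hι) (by simpa using hE)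

/-- Martin's axiom for σ-centered posets implies `𝔟 = 𝔠`. -/
theorem exists_forall_eventually_le (hMA : MASigmaCentered)
    (hι : Cardinal.mk ι < Cardinal.continuum) (g : ι → ℕ → ℕ) :
    ∃ G : ℕ → ℕ, ∀ i, g i ≤ᶠ[atTop] G := by
  have hcard : Cardinal.mk (ℕ ⊕ ι) < Cardinal.continuum := by
    rw [Cardinal.mk_sum, Cardinal.lift_id, Cardinal.lift_id, Cardinal.mk_nat]
    exact Cardinal.add_lt_of_lt Cardinal.aleph0_le_continuum Cardinal.aleph0_lt_continuum hι
  obtain ⟨F, hF, hFE⟩ := hMA.exists_posetFilter HechlerCondition.sigmaCentered hcard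
    (E := Sum.elim (fun n => {p | n ≤ p.len}) fun i => {p | ∀ n ≥ p.len, g i n ≤ p.fn n})
    (Sum.forall.2 ⟨HechlerCondition.denseBelow_le_len,
      fun i => HechlerCondition.denseBelow_forall_le_fn (g i)⟩)
  choose q hqF hq using fun n => hFE (.inl (n + 1))
  refine ⟨fun n => (q n).fn n, fun i => ?_⟩
  obtain ⟨p, hpF, hp⟩ := hFE (.inr i)
  filter_upwards [eventually_ge_atTop p.len] with n hn
  obtain ⟨r, -, hrp, hrq⟩ := hF.2.2 p hpF (q n) (hqF n)
  calc g i n ≤ p.fn n := hp n hn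
    _ ≤ r.fn n := hrp.2.1 n
    _ = (q n).fn n := hrq.2.2 (Nat.lt_of_succ_le (hq n))

/-- Martin's axiom for the countable poset of finite sets satisfying `p`, ordered by reverse
inclusion; `B` is the union of the generic filter. -/
theorem exists_set_of_dense (hMA : MASigmaCentered) {α : Type} [Countable α]
    (hι : Cardinal.mk ι < Cardinal.continuum) {p : Finset α → Prop} (hp : ∃ s, p s)
    {E : ι → Finset α → Prop} (hE : ∀ i s, p s → ∃ t ⊇ s, p t ∧ E i t) :
    ∃ B : Set α, (∀ s : Finset α, ↑s ⊆ B → ∃ t ⊇ s, p t) ∧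
      ∀ i, ∃ t : Finset α, ↑t ⊆ B ∧ E i t := by
  let P : Type := {s : (Finset α)ᵒᵈ // p (OrderDual.ofDual s)}
  have : Nonempty P := nonempty_subtype.2 hp
  have : Countable P := inferInstanceAs (Countable {s : Finset α // p s})
  have hP : SigmaCentered P :=
    sigmaCentered_of_countable_codomain id fun x T hT => ⟨x, fun q hq => (hT hq).ge⟩
  have hdense (i : ι) : DenseBelow {s : P | E i (OrderDual.ofDual s.1)} := fun ⟨s, hs⟩ => by
    obtain ⟨t, hst, ht, hEt⟩ := hE i _ hs
    exact ⟨⟨OrderDual.toDual t, ht⟩, hEt, hst⟩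
  obtain ⟨F, ⟨hFne, -, hFdir⟩, hFE⟩ := hMA.exists_posetFilter hP hι hdense
  let toSet (s : P) : Set α := ↑(OrderDual.ofDual s.1)
  refine ⟨⋃ s ∈ F, toSet s, fun s hs => ?_, fun i => ?_⟩
  · obtain ⟨t, -, hst⟩ := DirectedOn.exists_mem_subset_of_finset_subset_biUnion hFne
      (fun s hs t ht => hFdir s hs t ht) hs
    exact ⟨OrderDual.ofDual t.1, Finset.coe_subset.1 hst, t.2⟩
  · obtain ⟨t, htF, ht⟩ := hFE i
    exact ⟨OrderDual.ofDual t.1, subset_biUnion_of_mem (u := toSet) htF, ht⟩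

end MASigmaCentered

/-! ### The extension step -/

/-- The number of points of weight more than `1 / (m + 1) ^ 2`; the exponent is chosen so that
`m` of the remaining points have small total weight. -/
noncomputable def heavyCard {β : Type*} (g : β → ℝ) (m : ℕ) : ℕ :=
  {y | 1 / ((m : ℝ) + 1) ^ 2 < g y}.ncard

/-- A growth rate for `IterateSparse`: among `growth G m` points with values in a space whose
`heavyCard` is at most `G`, more than `m` map onto a set of small weight. -/
def growth (G : ℕ → ℕ) (m : ℕ) : ℕ := (m + 1) * (G (m + 1) + (m + 1))

lemma two_mul_le_growth (G : ℕ → ℕ) (m : ℕ) : 2 * m ≤ growth G m := by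
  unfold growth
  nlinarith

lemma tendsto_mul_one_div_add_one_sq :
    Tendsto (fun m : ℕ => (m : ℝ) * (1 / ((m : ℝ) + 1) ^ 2)) atTop (nhds 0) := by
  refine squeeze_zero (fun m => by positivity) (fun m => ?_)
    (tendsto_one_div_add_atTop_nhds_zero_nat (𝕜 := ℝ))
  rw [mul_one_div, div_le_div_iff₀ (by positivity) (by positivity)]
  nlinarith

/-- The filter whose positive sets are those that are not sparse relative to `growth G`. -/
abbrev cosparseGrowth (G : ℕ → ℕ) : Filter ℕ := cosparse (growth G) (two_mul_le_growth G)

lemma exists_finset_sum_image_le_of_not_iterateSparse {β : Type*} [DecidableEq β] {f : ℕ → β}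
    {g : β → ℝ} (hg : Tendsto g cofinite (nhds 0)) {G : ℕ → ℕ} (hG : heavyCard g ≤ᶠ[atTop] G)
    {A : Set ℕ} (hA : ¬ IterateSparse (growth G) A) {ε : ℝ} (hε : 0 < ε)
    (hAε : ∀ x ∈ A, g (f x) ≤ ε) (k N : ℕ) :
    ∃ a : Finset ℕ, ↑a ⊆ A ∧ ∑ y ∈ a.image f, g y ≤ ε ∧
      ∃ n ≥ N, (growth G)^[k] n < (↑a ∩ Iic ((growth G)^[n] n)).ncard := by
  obtain ⟨M, hM⟩ := eventually_atTop.1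
    (hG.and (tendsto_mul_one_div_add_one_sq.eventually_le_const hε))
  obtain ⟨n, hn, hcard⟩ := not_iterateSparse_iff.1 hA (k + 1) (max N M)
  obtain ⟨hNn, hMn⟩ := max_le_iff.1 hn
  set m := (growth G)^[k] n + 1
  have hnm : n ≤ (growth G)^[k] n := Function.id_le_iterate_of_id_le
    (fun m => (Nat.le_mul_of_pos_left m two_pos).trans (two_mul_le_growth G m)) k n
  obtain ⟨hGm, hmε⟩ := hM m (by omega)
  have hfin : (A ∩ Iic ((growth G)^[n] n)).Finite := (finite_Iic _).inter_of_right A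
  have hheavy : {y | 1 / ((m : ℝ) + 1) ^ 2 < g y}.Finite := by
    have hlight : ∀ᶠ y in cofinite, g y ≤ 1 / ((m : ℝ) + 1) ^ 2 :=
      hg.eventually_le_const (by positivity)
    simpa only [not_le] using eventually_cofinite.1 hlight
  obtain ⟨a, ha, hma, hsum⟩ := exists_subset_card_ge_sum_image_le (S := hfin.toFinset) hheavy hmε
    (fun x hx => hAε x (hfin.mem_toFinset.1 hx).1) <| by
      rw [← ncard_eq_toFinset_card _ hfin]
      refine lt_of_le_of_lt (Nat.mul_le_mul_left m (Nat.add_le_add_right hGm m)) ?_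
      rwa [Function.iterate_succ_apply', growth] at hcard
  have haA : ↑a ⊆ A ∩ Iic ((growth G)^[n] n) := hfin.coe_toFinset ▸ Finset.coe_subset.2 ha
  refine ⟨a, haA.trans inter_subset_left, hsum, n, hNn, ?_⟩
  rw [inter_eq_left.2 (haA.trans inter_subset_right), ncard_coe_finset]
  exact hma

namespace MASigmaCentered

lemma exists_image_mem_Ig_of_tendsto (hMA : MASigmaCentered) {f : ℕ → ℕ} {g : ℕ → ℝ} (hg₀ : 0 ≤ g)
    (hg : Tendsto g cofinite (nhds 0)) {G : ℕ → ℕ} (hG : heavyCard g ≤ᶠ[atTop] G) {ι : Type}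
    (hι : Cardinal.mk ι < Cardinal.continuum) {L : Filter ℕ} {s : ι → Set ℕ}
    (hL : L.HasBasis (fun _ => True) s) [(cosparseGrowth G ⊓ L).NeBot]
    (hf : Tendsto f (cosparseGrowth G ⊓ L) cofinite) :
    ∃ B : Set ℕ, f '' B ∈ Ig g ∧ (cosparseGrowth G ⊓ (L ⊓ 𝓟 B)).NeBot := by
  have hcard : Cardinal.mk (ι × ℕ × ℕ) < Cardinal.continuum := by
    rw [Cardinal.mk_prod, Cardinal.lift_id, Cardinal.lift_id]
    exact Cardinal.mul_lt_of_lt Cardinal.aleph0_le_continuum hι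
      (Cardinal.mk_le_aleph0.trans_lt Cardinal.aleph0_lt_continuum)
  obtain ⟨B, hB, hBs⟩ := hMA.exists_set_of_dense hcard
    (p := fun t : Finset ℕ => ∑ y ∈ t.image f, g y < 1) ⟨∅, by simp⟩
    (E := fun ⟨i, k, N⟩ t =>
      ∃ n ≥ N, (growth G)^[k] n < (↑t ∩ s i ∩ Iic ((growth G)^[n] n)).ncard) <| by
    rintro ⟨i, k, N⟩ t ht
    obtain ⟨ε, htε, hε⟩ := exists_add_lt_and_pos_of_lt ht
    have hlight : s i ∩ {x | g (f x) ≤ ε} ∈ cosparseGrowth G ⊓ L :=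
      inter_mem (mem_inf_of_right (hL.mem_of_mem trivial))
        ((hg.comp hf).eventually_le_const hε)
    obtain ⟨a, ha, hasum, n, hn, hlt⟩ := exists_finset_sum_image_le_of_not_iterateSparse hg hG
      (not_iterateSparse_of_mem inf_le_left hlight) hε (fun x hx => hx.2) k N
    refine ⟨t ∪ a, Finset.subset_union_left, ?_, n, hn, hlt.trans_le ?_⟩
    · rw [Finset.image_union]
      linarith [sum_union_le_of_nonneg hg₀ (t.image f) (a.image f)]
    · exact ncard_le_ncard (fun x hx => ⟨⟨Finset.mem_union_right t hx.1, (ha hx.1).1⟩, hx.2⟩)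
        ((finite_Iic _).inter_of_right _)
  refine ⟨B, mem_Ig_of_forall_sum_le hg₀ (c := 1) fun u hu => ?_, ?_⟩
  · obtain ⟨v, hvB, rfl⟩ := Finset.subset_set_image_iff.1 hu
    obtain ⟨t, hvt, ht⟩ := hB v hvB
    exact (Finset.sum_le_sum_of_subset_of_nonneg (Finset.image_subset_image hvt)
      fun y _ _ => hg₀ y).trans ht.le
  · refine (cosparse_inf_neBot_iff (hL.inf_principal B)).2 fun i => ?_
    refine not_iterateSparse_iff.2 fun k N => ?_
    obtain ⟨t, htB, n, hn, hlt⟩ := hBs (i, k, N)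
    refine ⟨n, hn, hlt.trans_le (ncard_le_ncard ?_ ((finite_Iic _).inter_of_right _))⟩
    rw [inter_comm (s i)]
    gcongr

theorem exists_image_mem_Ig (hMA : MASigmaCentered) (f : ℕ → ℕ) {g : ℕ → ℝ} (hg₀ : 0 ≤ g)
    (hg : Tendsto g cofinite (nhds 0)) {G : ℕ → ℕ} (hG : heavyCard g ≤ᶠ[atTop] G) {ι : Type}
    (hι : Cardinal.mk ι < Cardinal.continuum) {L : Filter ℕ} {s : ι → Set ℕ}
    (hL : L.HasBasis (fun _ => True) s) [(cosparseGrowth G ⊓ L).NeBot] :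
    ∃ B : Set ℕ, f '' B ∈ Ig g ∧ (cosparseGrowth G ⊓ (L ⊓ 𝓟 B)).NeBot := by
  by_cases hf : Tendsto f (cosparseGrowth G ⊓ L) cofinite
  · exact hMA.exists_image_mem_Ig_of_tendsto hg₀ hg hG hι hL hf
  · obtain ⟨v, hv⟩ : ∃ v, (f ⁻¹' {v})ᶜ ∉ cosparseGrowth G ⊓ L := by
      contrapose! hf
      exact le_cofinite_iff_eventually_ne.2 hf
    rw [notMem_iff_inf_principal_compl, compl_compl, inf_assoc] at hv
    exact ⟨f ⁻¹' {v},
      mem_Ig_of_finite ((finite_singleton v).subset (image_preimage_subset _ _)), hv⟩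

end MASigmaCentered

/-! ### Transfinite construction of ultrafilters -/

section Transfinite

universe u v

variable {α : Type u} {X : Type v} {J : Filter α}

lemma inf_biInf_neBot_of_Iic [LinearOrder X] [J.NeBot] {F : X → Filter α} {s : Set X}
    (h : ∀ x ∈ s, (J ⊓ ⨅ y ∈ Iic x, F y).NeBot) : (J ⊓ ⨅ x ∈ s, F x).NeBot := by
  obtain rfl | hs := s.eq_empty_or_nonempty
  · simpa
  have := hs.to_subtype
  have hanti : Antitone fun x : s => J ⊓ ⨅ y ∈ Iic (x : X), F y := fun x y hxy =>
    inf_le_inf_left J (biInf_mono fun _ hz => le_trans hz hxy)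
  have hinf : (⨅ x : s, J ⊓ ⨅ y ∈ Iic (x : X), F y).NeBot :=
    iInf_neBot_of_directed' hanti.directed_ge fun x => h x x.2
  refine hinf.mono ?_
  rw [← inf_iInf]
  exact inf_le_inf_left J (le_iInf₂ fun x hx => iInf_le_of_le ⟨x, hx⟩ (iInf₂_le x self_mem_Iic))

lemma inf_biInf_neBot_of_wellFounded [LinearOrder X] [WellFoundedLT X] [J.NeBot] {F : X → Filter α}
    (h : ∀ x, (J ⊓ ⨅ y ∈ Iio x, F y).NeBot → (J ⊓ ((⨅ y ∈ Iio x, F y) ⊓ F x)).NeBot) (s : Set X) :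
    (J ⊓ ⨅ x ∈ s, F x).NeBot := by
  refine inf_biInf_neBot_of_Iic fun x hx => ?_
  clear hx
  induction x using WellFoundedLT.induction with
  | ind x ih =>
    rw [← Iio_insert, iInf_insert, inf_comm (F x)]
    exact h x (inf_biInf_neBot_of_Iic ih)

/-- Transfinite recursion of length the initial ordinal of `X`: the requirement `P x` is met by
adding one set to the fewer than `#X` sets chosen before. -/
theorem exists_ultrafilter_le_forall_exists_mem (J : Filter α) [J.NeBot] (P : X → Set α → Prop)
    (h : ∀ x {ι : Type v} (A : ι → Set α), Cardinal.mk ι < Cardinal.mk X →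
      (J ⊓ ⨅ i, 𝓟 (A i)).NeBot → ∃ B, P x B ∧ (J ⊓ ((⨅ i, 𝓟 (A i)) ⊓ 𝓟 B)).NeBot) :
    ∃ U : Ultrafilter α, ↑U ≤ J ∧ ∀ x, ∃ B ∈ U, P x B := by
  obtain ⟨_, _, hX⟩ := Cardinal.exists_ord_eq_type_lt X
  choose! next hnextP hnext using fun x (A : Iio x → Set α) => h x A (Cardinal.mk_Iio_lt x hX)
  let S : X → Set α := wellFounded_lt.fix fun x A => next x fun y => A y y.2
  have hS (x : X) : S x = next x fun y => S y := wellFounded_lt.fix_eq _ x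
  have hneBot : ∀ s : Set X, (J ⊓ ⨅ x ∈ s, 𝓟 (S x)).NeBot := by
    refine inf_biInf_neBot_of_wellFounded fun x hx => ?_
    rw [iInf_subtype'] at hx ⊢
    exact hS x ▸ hnext x _ hx
  have := hneBot univ
  refine ⟨.of (J ⊓ ⨅ x ∈ univ, 𝓟 (S x)), (Ultrafilter.of_le _).trans inf_le_left,
    fun x => ⟨S x, ?_, ?_⟩⟩
  · exact le_principal_iff.1 <|
      (Ultrafilter.of_le _).trans (inf_le_of_right_le (iInf₂_le x (mem_univ x)))
  · have hx := hneBot (Iio x)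
    rw [iInf_subtype'] at hx
    exact hS x ▸ hnextP x _ hx

end Transfinite

lemma mk_finset_lt_of_aleph0_lt {ι : Type*} {c : Cardinal} (hc : Cardinal.aleph0 < c)
    (hι : Cardinal.mk ι < c) : Cardinal.mk (Finset ι) < c := by
  cases finite_or_infinite ι
  · exact Cardinal.mk_le_aleph0.trans_lt hc
  · rwa [Cardinal.mk_finset_of_infinite]

lemma hasBasis_iInf_principal_finset {α ι : Type*} (A : ι → Set α) :
    (⨅ i, 𝓟 (A i)).HasBasis (fun _ => True) fun t : Finset ι => ⋂ i ∈ t, A i := by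
  refine ⟨fun U => ?_⟩
  simp only [(hasBasis_iInf_principal_finite A).mem_iff, exists_finite_iff_finset, true_and,
    Finset.mem_coe]

theorem many_ideals_not_rapid (hMA : MASigmaCentered) (D : Set (Set (Set ℕ)))
    (hD : ∀ I ∈ D, ∃ g : ℕ → ℝ, SummableTall g ∧ I = Ig g)
    (hcard : Cardinal.mk ↥D < Cardinal.continuum) :
    ∃ U : Ultrafilter ℕ, (↑U : Filter ℕ) ≤ Filter.cofinite ∧
      (∀ I ∈ D, IUlt U I) ∧ ¬ Rapid U := by
  choose g hg hIg using fun I : D => hD I I.2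
  obtain ⟨G, hG⟩ := hMA.exists_forall_eventually_le hcard fun I => heavyCard (g I)
  have htasks : Cardinal.mk ((ℕ → ℕ) × D) ≤ Cardinal.continuum := by
    simpa using mul_le_mul_right hcard.le Cardinal.continuum
  have := cosparse_neBot (hh := two_mul_le_growth G)
  obtain ⟨U, hU, hUtask⟩ := exists_ultrafilter_le_forall_exists_mem (cosparseGrowth G)
    (fun (task : (ℕ → ℕ) × D) B => task.1 '' B ∈ Ig (g task.2)) fun ⟨f, I⟩ ι A hι _ =>
      hMA.exists_image_mem_Ig f (fun n => ((hg I).1 n).le) (Nat.cofinite_eq_atTop ▸ (hg I).2.2)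
        (hG I) (mk_finset_lt_of_aleph0_lt Cardinal.aleph0_lt_continuum (hι.trans_le htasks))
        (hasBasis_iInf_principal_finset A)
  refine ⟨U, hU.trans cosparse_le_cofinite, fun I hI f => ?_, not_rapid_of_le_cosparse hU⟩
  obtain ⟨B, hBU, hfB⟩ := hUtask (f, ⟨I, hI⟩)
  exact ⟨B, hBU, (hIg ⟨I, hI⟩).ge hfB⟩
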